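/- Let (W, S) be a finite Coxeter system over a nonempty finite index set B. Then for every element v ∈ W and every index i ∈ B there exist a Hamiltonian circuit map θ : ℤ/kℤ → W (k = |W|) and t ∈ ℤ/kℤ such that θ(t) = v and θ(t+1) = sᵢ · v; that is, the Cayley graph of (W, S) has a Hamilton circuit passing through any prescribed vertex along an edge with any prescribed label. -/

import Mathlib

/-! The circuits are built by induction on the set `T` of allowed generators. In a finite Coxeter
group, pairing the sum of the simple roots in `T` with itself under an invariant inner product shows
that some row of the cosine matrix, restricted to `T`, has positive sum. As every bond of order at
least three contributes at most `-1 / 2` to its row, the corresponding vertex `k` of the Coxeter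
diagram has degree at most one in `T`. Put `H = W_{T \ {k}}`. A simple reflection is not a product
of other ones, so a circuit of `H` uses every label, and hence every right coset of `H` has a
circuit through any given edge.

Take a maximal union `U` of right cosets of `H`, containing `H`, that has a circuit. If some `a ∈ U`
had `s k * a ∉ U`, the two edges of the circuit at `a` would have distinct labels in `T \ {k}`, so
one of them, `i` say, commutes with `k`. Then `a`, `s i * a`, `s i * s k * a`, `s k * a` is a
square, and swapping its `i`-edges for its `k`-edges merges `U` with the coset of `s k * a`. The
argument needs the two circuit neighbours of `a` to be distinct, so `|H| > 2`; the subgroups with at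
most two generators are treated directly, their circuits alternating the generators. -/

namespace CoxeterCircuit

section GeometricRepresentation

open Polynomial.Chebyshev Real

theorem eval_S_add_eval_S_eq_zero {m : ℕ} (hm : 3 ≤ m) {a b : ℤ} (hab : a + b + 2 = m) :
    (S ℝ a).eval (2 * cos (2 * π / m)) + (S ℝ b).eval (2 * cos (2 * π / m)) = 0 := by
  have hm' : (3 : ℝ) ≤ m := by exact_mod_cast hm
  set θ := 2 * π / m with hθ
  have sin_pos : 0 < sin θ := by
    apply sin_pos_of_pos_of_lt_pi
    · positivity
    · rw [hθ, div_lt_iff₀ (by linarith)]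
      nlinarith [pi_pos]
  have angle_eq : ((b : ℝ) + 1) * θ = 2 * π - (a + 1) * θ := by
    have hab' : (a : ℝ) + b + 2 = m := by exact_mod_cast hab
    have hmθ : m * θ = 2 * π := by rw [hθ]; field_simp
    linear_combination hmθ + θ * hab'
  refine (mul_eq_zero.mp ?_).resolve_right sin_pos.ne'
  rw [add_mul, S_two_mul_real_cos, S_two_mul_real_cos, angle_eq, sin_two_pi_sub, add_neg_cancel]

variable {V : Type*} [AddCommGroup V] [Module ℝ V] {x y : V} {f g : Module.Dual ℝ V}

theorem reflection_mul_reflection_pow_eq_one (hf : f x = 2) (hg : g y = 2) {m : ℕ} (hm : 3 ≤ m)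
    (hfg : f y * g x = 4 * cos (π / m) ^ 2) :
    (Module.reflection hf * Module.reflection hg) ^ m = 1 := by
  set t := 2 * cos (2 * π / m) with ht
  have t_eq : t = f y * g x - 2 := by
    rw [hfg, ht, mul_div_assoc, cos_two_mul]
    ring
  have hS {a b : ℤ} (hab : a + b + 2 = m) : (S ℝ a).eval t + (S ℝ b).eval t = 0 :=
    eval_S_add_eval_S_eq_zero hm hab
  have hS_self {a : ℤ} (ha : a + a + 2 = m) : (S ℝ a).eval t = 0 :=
    self_eq_neg.mp (eq_neg_of_add_eq_zero_left (hS ha))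
  have coeff₁ : (S ℝ ((m - 2 : ℤ) / 2)).eval t *
      ((S ℝ ((m - 1 : ℤ) / 2)).eval t + (S ℝ ((m - 3 : ℤ) / 2)).eval t) = 0 := by
    rcases Nat.even_or_odd' m with ⟨k, hk | hk⟩
    · rw [hS_self (by omega), zero_mul]
    · rw [hS (by omega), mul_zero]
  have coeff₂ : (S ℝ ((m - 1 : ℤ) / 2)).eval t *
      ((S ℝ (m / 2 : ℤ)).eval t + (S ℝ ((m - 2 : ℤ) / 2)).eval t) = 0 := by
    rcases Nat.even_or_odd' m with ⟨k, hk | hk⟩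
    · rw [hS_self (by omega), zero_mul]
    · rw [hS (by omega), mul_zero]
  apply LinearEquiv.toLinearMap_injective
  rw [Module.reflection_mul_reflection_pow hf hg m t t_eq, coeff₁, coeff₂]
  simp

theorem reflection_mul_reflection_sq_eq_one (hf : f x = 2) (hg : g y = 2) (hfy : f y = 0)
    (hgx : g x = 0) : (Module.reflection hf * Module.reflection hg) ^ 2 = 1 := by
  ext v
  simp only [pow_two, LinearEquiv.mul_apply, Module.reflection_apply, map_sub, map_smul, hf, hg,
    hfy, hgx, LinearEquiv.coe_one, id]
  module

variable {B W : Type*} [Group W] {M : CoxeterMatrix B}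

/-- The matrix of the canonical bilinear form attached to a Coxeter matrix. An infinite bond is
encoded by `M i j = 0`, for which `π / 0 = 0` yields the entry `-1`, as it should. -/
noncomputable def cosForm (M : CoxeterMatrix B) (i j : B) : ℝ := -cos (π / M i j)

theorem cosForm_symm (i j : B) : cosForm M i j = cosForm M j i := by
  rw [cosForm, cosForm, M.symmetric i j]

theorem cosForm_self (i : B) : cosForm M i i = 1 := by
  simp [cosForm]

theorem cosForm_eq_zero {i j : B} (h : M i j = 2) : cosForm M i j = 0 := by
  simp [cosForm, h]

theorem cosForm_le_neg_half {i j : B} (hij : i ≠ j) (h : M i j ≠ 2) :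
    cosForm M i j ≤ -(1 / 2) := by
  have ne_one : M i j ≠ 1 := M.off_diagonal i j hij
  rw [cosForm, neg_le_neg_iff, ← cos_pi_div_three]
  rcases Nat.eq_zero_or_pos (M i j) with h_zero | h_pos
  · simp only [h_zero, Nat.cast_zero, div_zero, cos_zero]
    exact cos_le_one _
  · have three_le : (3 : ℝ) ≤ M i j := by exact_mod_cast (by omega : 3 ≤ M i j)
    apply cos_le_cos_of_nonneg_of_le_pi (by positivity) (by linarith [pi_pos])
    gcongr

theorem cosForm_nonpos {i j : B} (hij : i ≠ j) : cosForm M i j ≤ 0 := by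
  by_cases h : M i j = 2
  · exact (cosForm_eq_zero h).le
  · linarith [cosForm_le_neg_half hij h]

/-- The coroot of the `i`-th basis vector of `B →₀ ℝ` for the form `cosForm M`, which defines the
`i`-th reflection of the geometric representation. -/
noncomputable def simpleCoroot (M : CoxeterMatrix B) (i : B) : Module.Dual ℝ (B →₀ ℝ) :=
  Finsupp.linearCombination ℝ fun j ↦ 2 * cosForm M i j

theorem simpleCoroot_single (M : CoxeterMatrix B) (i j : B) :
    simpleCoroot M i (Finsupp.single j 1) = 2 * cosForm M i j := by
  simp [simpleCoroot]

theorem simpleCoroot_single_self (M : CoxeterMatrix B) (i : B) :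
    simpleCoroot M i (Finsupp.single i 1) = 2 := by
  rw [simpleCoroot_single, cosForm_self, mul_one]

/-- The reflection by which the `i`-th simple reflection acts in the geometric representation. -/
noncomputable def simpleReflection (M : CoxeterMatrix B) (i : B) : (B →₀ ℝ) ≃ₗ[ℝ] (B →₀ ℝ) :=
  Module.reflection (simpleCoroot_single_self M i)

theorem isLiftable_simpleReflection : M.IsLiftable (simpleReflection M) := by
  intro i j
  rcases eq_or_ne i j with rfl | hij
  · rw [M.diagonal i, pow_one]
    exact LinearEquiv.ext (Module.involutive_reflection (simpleCoroot_single_self M i))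
  have ne_one : M i j ≠ 1 := M.off_diagonal i j hij
  obtain h | h | h : M i j = 0 ∨ M i j = 2 ∨ 3 ≤ M i j := by omega
  · rw [h, pow_zero]
  · rw [h, simpleReflection, simpleReflection]
    apply reflection_mul_reflection_sq_eq_one (simpleCoroot_single_self M i)
      (simpleCoroot_single_self M j)
    · rw [simpleCoroot_single, cosForm_eq_zero h, mul_zero]
    · rw [simpleCoroot_single, cosForm_symm, cosForm_eq_zero h, mul_zero]
  · apply reflection_mul_reflection_pow_eq_one (simpleCoroot_single_self M i)
      (simpleCoroot_single_self M j) h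
    rw [simpleCoroot_single, simpleCoroot_single, cosForm_symm j i, cosForm]
    ring

/-- The geometric representation of a Coxeter group, on the free module `B →₀ ℝ`. -/
noncomputable def geometricRep (cs : CoxeterSystem M W) : W →* ((B →₀ ℝ) ≃ₗ[ℝ] (B →₀ ℝ)) :=
  cs.lift ⟨simpleReflection M, isLiftable_simpleReflection⟩

theorem geometricRep_simple_apply (cs : CoxeterSystem M W) (i : B) (v : B →₀ ℝ) :
    geometricRep cs (cs.simple i) v = v - simpleCoroot M i v • Finsupp.single i 1 := by
  rw [geometricRep, cs.lift_apply_simple isLiftable_simpleReflection, simpleReflection,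
    Module.reflection_apply]

/-- The standard parabolic subgroup generated by the `s i` with `i ∈ T`. -/
abbrev parabolic (s : B → W) (T : Set B) : Subgroup W :=
  Subgroup.closure (s '' T)

theorem geometricRep_apply_of_notMem (cs : CoxeterSystem M W) {T : Set B} {i : B} (hi : i ∉ T)
    {w : W} (hw : w ∈ parabolic cs.simple T) (v : B →₀ ℝ) :
    geometricRep cs w v i = v i := by
  induction hw using Subgroup.closure_induction generalizing v with
  | mem w hw =>
    obtain ⟨j, hj, rfl⟩ := hw
    have hji : j ≠ i := ne_of_mem_of_not_mem hj hi
    simp [geometricRep_simple_apply, hji.symm]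
  | one => simp
  | mul a b _ _ ha hb => rw [map_mul, LinearEquiv.mul_apply, ha, hb]
  | inv a _ ha => rw [← ha, ← LinearEquiv.mul_apply, ← map_mul, mul_inv_cancel, map_one]; rfl

theorem simple_notMem_parabolic (cs : CoxeterSystem M W) {T : Set B} {i : B} (hi : i ∉ T) :
    cs.simple i ∉ parabolic cs.simple T := by
  intro h
  have coord_eq := geometricRep_apply_of_notMem cs hi h (Finsupp.single i 1)
  rw [geometricRep_simple_apply, simpleCoroot_single_self] at coord_eq
  norm_num at coord_eq

end GeometricRepresentation

section Leaf

theorem exists_posDef_invariant_bilinForm {R V G : Type*} [CommRing R] [PartialOrder R]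
    [IsStrictOrderedRing R] [AddCommGroup V] [Module R V] [Group G] [Finite G]
    (ρ : G →* (V ≃ₗ[R] V)) {b : LinearMap.BilinForm R V} (hb : ∀ x ≠ 0, 0 < b x x) :
    ∃ Q : LinearMap.BilinForm R V,
      (∀ x ≠ 0, 0 < Q x x) ∧ ∀ g x y, Q (ρ g x) (ρ g y) = Q x y := by
  have := Fintype.ofFinite G
  refine ⟨∑ g, b.compl₁₂ (ρ g).toLinearMap (ρ g).toLinearMap, fun x hx ↦ ?_, fun g x y ↦ ?_⟩
  · simp only [LinearMap.sum_apply, LinearMap.compl₁₂_apply, LinearEquiv.coe_coe]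
    exact Finset.sum_pos (fun g _ ↦ hb _ ((ρ g).map_ne_zero_iff.mpr hx)) Finset.univ_nonempty
  · simp only [LinearMap.sum_apply, LinearMap.compl₁₂_apply, LinearEquiv.coe_coe,
      ← LinearEquiv.mul_apply, ← map_mul]
    exact Equiv.sum_comp (Equiv.mulRight g) fun h ↦ b (ρ h x) (ρ h y)

theorem exists_posDef_bilinForm_finsupp (R ι : Type*) [CommRing R] [LinearOrder R]
    [IsStrictOrderedRing R] :
    ∃ b : LinearMap.BilinForm R (ι →₀ R), ∀ x ≠ 0, 0 < b x x := by
  refine ⟨(Finsupp.bilinearCombination R R).comp Finsupp.lcoeFun, fun x hx ↦ ?_⟩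
  simp only [LinearMap.comp_apply, Finsupp.bilinearCombination_apply,
    Finsupp.linearCombination_apply, Finsupp.sum, Finsupp.lcoeFun_apply, smul_eq_mul]
  exact Finset.sum_pos (fun i hi ↦ mul_self_pos.mpr (Finsupp.mem_support_iff.mp hi))
    (Finsupp.support_nonempty_iff.mpr hx)

theorem two_mul_apply_eq_of_invariant_reflection {R V : Type*} [CommRing R] [AddCommGroup V]
    [Module R V] {Q : LinearMap.BilinForm R V} {x : V} {f : Module.Dual R V} (hf : f x = 2)
    (hQ : ∀ y z, Q (Module.reflection hf y) (Module.reflection hf z) = Q y z) (y : V) :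
    2 * Q y x = f y * Q x x := by
  have h := hQ y x
  rw [Module.reflection_apply_self, Module.reflection_apply] at h
  simp only [map_neg, map_sub, map_smul, LinearMap.sub_apply, LinearMap.smul_apply,
    smul_eq_mul] at h
  linear_combination -h

variable {B W : Type*} [Group W] {M : CoxeterMatrix B}

theorem exists_sum_cosForm_pos [Finite W] (cs : CoxeterSystem M W) {T : Finset B}
    (hT : T.Nonempty) : ∃ k ∈ T, 0 < ∑ j ∈ T, cosForm M k j := by
  obtain ⟨b, hb⟩ := exists_posDef_bilinForm_finsupp ℝ B
  obtain ⟨Q, Q_pos, Q_inv⟩ := exists_posDef_invariant_bilinForm (geometricRep cs) hb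
  let e (i : B) : B →₀ ℝ := Finsupp.single i 1
  have e_ne_zero (i : B) : e i ≠ 0 := by simp [e]
  set v := ∑ j ∈ T, e j with hv
  have pairing (k : B) : Q v (e k) = (∑ j ∈ T, cosForm M k j) * Q (e k) (e k) := by
    have hQ := two_mul_apply_eq_of_invariant_reflection (Q := Q) (simpleCoroot_single_self M k)
      (fun y z ↦ by
        simpa only [geometricRep_simple_apply, Module.reflection_apply] using
          Q_inv (cs.simple k) y z) v
    have coroot_v : simpleCoroot M k v = 2 * ∑ j ∈ T, cosForm M k j := by
      simp only [hv, e, map_sum, simpleCoroot_single, Finset.mul_sum]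
    rw [coroot_v, mul_assoc] at hQ
    exact mul_left_cancel₀ two_ne_zero hQ
  have v_ne_zero : v ≠ 0 := by
    classical
    obtain ⟨i, hi⟩ := hT
    intro h
    have coord : v i = 1 := by simp [hv, e, Finsupp.finsetSum_apply, Finsupp.single_apply, hi]
    simp [h] at coord
  have sum_pos : 0 < ∑ k ∈ T, Q v (e k) := by
    rw [← map_sum]
    exact Q_pos v v_ne_zero
  obtain ⟨k, hk, hQk⟩ := Finset.exists_lt_of_sum_lt (f := fun _ ↦ (0 : ℝ)) (by simpa using sum_pos)
  rw [pairing] at hQk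
  exact ⟨k, hk, pos_of_mul_pos_left hQk (Q_pos _ (e_ne_zero k)).le⟩

theorem sum_cosForm_nonpos {T : Finset B} {k i j : B} (hk : k ∈ T) (hi : i ∈ T) (hj : j ∈ T)
    (hki : k ≠ i) (hkj : k ≠ j) (hij : i ≠ j) (hMi : M k i ≠ 2) (hMj : M k j ≠ 2) :
    ∑ l ∈ T, cosForm M k l ≤ 0 := by
  classical
  have hi' : i ∈ T.erase k := Finset.mem_erase.mpr ⟨hki.symm, hi⟩
  have hj' : j ∈ (T.erase k).erase i := Finset.mem_erase.mpr
    ⟨hij.symm, Finset.mem_erase.mpr ⟨hkj.symm, hj⟩⟩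
  have rest_nonpos : ∑ l ∈ ((T.erase k).erase i).erase j, cosForm M k l ≤ 0 :=
    Finset.sum_nonpos fun l hl ↦ cosForm_nonpos fun h ↦ by simp [h] at hl
  rw [← Finset.add_sum_erase T _ hk, ← Finset.add_sum_erase _ _ hi',
    ← Finset.add_sum_erase _ _ hj', cosForm_self]
  linarith [cosForm_le_neg_half hki hMi, cosForm_le_neg_half hkj hMj]

theorem exists_leaf [Finite W] (cs : CoxeterSystem M W) {T : Finset B} (hT : T.Nonempty) :
    ∃ k ∈ T, ((T : Set B) \ {k}).Pairwise fun i j ↦ M k i = 2 ∨ M k j = 2 := by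
  obtain ⟨k, hk, sum_pos⟩ := exists_sum_cosForm_pos cs hT
  refine ⟨k, hk, fun i hi j hj hij ↦ ?_⟩
  by_contra! h
  exact sum_pos.not_ge
    (sum_cosForm_nonpos hk hi.1 hj.1 (Ne.symm hi.2) (Ne.symm hj.2) hij h.1 h.2)

theorem commute_simple_of_eq_two (cs : CoxeterSystem M W) {i j : B} (h : M i j = 2) :
    Commute (cs.simple i) (cs.simple j) := by
  have sq_eq_one := cs.simple_mul_simple_pow i j
  rw [h, pow_two] at sq_eq_one
  simpa [Commute, SemiconjBy] using eq_inv_of_mul_eq_one_left sq_eq_one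

end Leaf

section Cycles

open Equiv

variable {α : Type*} {σ τ : Perm α} {U V : Set α} {a c : α}

theorem forall_mem_of_isCycleOn (hU : U.Finite) (hσ : σ.IsCycleOn U) (ha : a ∈ U) {p : α → Prop}
    (hpa : p a) (hp : ∀ x ∈ U, p x → p (σ x)) : ∀ x ∈ U, p x := by
  intro x hx
  obtain ⟨n, rfl⟩ := hσ.exists_pow_eq' hU ha hx
  clear hx
  induction n with
  | zero => exact hpa
  | succ n ih =>
    rw [pow_succ', Perm.mul_apply]
    exact hp _ ((hσ.1.perm_pow n).mapsTo ha) ih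

theorem apply_apply_ne_of_isCycleOn (hσ : σ.IsCycleOn U) (hU : 2 < U.ncard) (ha : a ∈ U) :
    σ (σ a) ≠ a := by
  have U_finite : U.Finite := Set.finite_of_ncard_pos (by omega)
  lift U to Finset α using U_finite
  rw [Set.ncard_coe_finset] at hU
  intro h
  exact (Nat.le_of_dvd two_pos ((hσ.pow_apply_eq ha (n := 2)).mp h)).not_gt hU

theorem exists_perm_eqOn_eqOn (hUV : Disjoint U V) (hσ : ∀ x, σ x ∈ U ↔ x ∈ U)
    (hτ : ∀ x, τ x ∈ V ↔ x ∈ V) : ∃ ρ : Perm α, Set.EqOn ρ σ U ∧ Set.EqOn ρ τ V := by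
  classical
  refine ⟨Perm.ofSubtype (σ.subtypePerm hσ) * Perm.ofSubtype (τ.subtypePerm hτ),
    fun x hx ↦ ?_, fun x hx ↦ ?_⟩
  · rw [Perm.mul_apply, Perm.ofSubtype_subtypePerm_of_not_mem hτ (hUV.notMem_of_mem_left hx),
      Perm.ofSubtype_subtypePerm_of_mem hσ hx]
  · rw [Perm.mul_apply, Perm.ofSubtype_subtypePerm_of_mem hτ hx,
      Perm.ofSubtype_subtypePerm_of_not_mem hσ (hUV.notMem_of_mem_right ((hτ x).mpr hx))]

theorem sameCycle_of_eq_off_singleton {ρ : Perm α} (hU : U.Finite) (hσ : σ.IsCycleOn U)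
    (ha : a ∈ U) (hρ : ∀ x ∈ U, x ≠ a → ρ x = σ x) : ∀ x ∈ U, ρ.SameCycle (σ a) x := by
  refine forall_mem_of_isCycleOn hU hσ (hσ.1.mapsTo ha) (Perm.SameCycle.refl _ _) ?_
  intro x hx hsame
  rcases eq_or_ne x a with rfl | hxa
  · rfl
  · rwa [← hρ x hx hxa, Perm.sameCycle_apply_right]

theorem exists_isCycleOn_union (hU : U.Finite) (hV : V.Finite) (hUV : Disjoint U V)
    (hσ : σ.IsCycleOn U) (hτ : τ.IsCycleOn V) (ha : a ∈ U) (hc : c ∈ V) :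
    ∃ ρ : Perm α, ρ.IsCycleOn (U ∪ V) ∧ ρ a = τ c ∧ ρ c = σ a ∧
      (∀ x ∈ U, x ≠ a → ρ x = σ x) ∧ ∀ x ∈ V, x ≠ c → ρ x = τ x := by
  classical
  obtain ⟨ρ₀, eqOn_U, eqOn_V⟩ := exists_perm_eqOn_eqOn hUV (fun _ ↦ hσ.apply_mem_iff)
    fun _ ↦ hτ.apply_mem_iff
  set ρ := ρ₀ * swap a c with hρ
  have ρ_a : ρ a = τ c := by rw [hρ, Perm.mul_apply, swap_apply_left, eqOn_V hc]
  have ρ_c : ρ c = σ a := by rw [hρ, Perm.mul_apply, swap_apply_right, eqOn_U ha]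
  have ρ_U : ∀ x ∈ U, x ≠ a → ρ x = σ x := fun x hx hxa ↦ by
    rw [hρ, Perm.mul_apply, swap_apply_of_ne_of_ne hxa (hUV.ne_of_mem hx hc), eqOn_U hx]
  have ρ_V : ∀ x ∈ V, x ≠ c → ρ x = τ x := fun x hx hxc ↦ by
    rw [hρ, Perm.mul_apply, swap_apply_of_ne_of_ne (hUV.ne_of_mem ha hx).symm hxc, eqOn_V hx]
  have bijOn : Set.BijOn ρ (U ∪ V) (U ∪ V) :=
    ((hσ.1.congr eqOn_U.symm).union (hτ.1.congr eqOn_V.symm) ρ₀.injective.injOn).comp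
      (swap_bijOn_self (iff_of_true (Or.inl ha) (Or.inr hc)))
  have sameCycle_U := sameCycle_of_eq_off_singleton hU hσ ha ρ_U
  have sameCycle_V := sameCycle_of_eq_off_singleton hV hτ hc ρ_V
  have link : ρ.SameCycle (σ a) (τ c) := by
    rw [← ρ_a, Perm.sameCycle_apply_right]
    exact sameCycle_U a ha
  have sameCycle : ∀ x ∈ U ∪ V, ρ.SameCycle (σ a) x := fun x hx ↦
    hx.elim (sameCycle_U x) fun hxV ↦ link.trans (sameCycle_V x hxV)
  exact ⟨ρ, ⟨bijOn, fun x hx y hy ↦ (sameCycle x hx).symm.trans (sameCycle y hy)⟩,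
    ρ_a, ρ_c, ρ_U, ρ_V⟩

theorem exists_bijective_zmod_of_isCycleOn_univ [Finite α] (hσ : σ.IsCycleOn Set.univ) (a : α) :
    ∃ θ : ZMod (Nat.card α) → α,
      Function.Bijective θ ∧ (∀ t, θ (t + 1) = σ (θ t)) ∧ θ 0 = a := by
  have := Fintype.ofFinite α
  have : NeZero (Nat.card α) := ⟨(Nat.card_pos_iff.mpr ⟨⟨a⟩, ‹_›⟩).ne'⟩
  have pow_eq_pow_iff (m n : ℕ) : (σ ^ m) a = (σ ^ n) a ↔ (m : ZMod (Nat.card α)) = n := by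
    rw [ZMod.natCast_eq_natCast_iff, Nat.card_eq_fintype_card]
    exact Perm.IsCycleOn.pow_apply_eq_pow_apply (s := Finset.univ) (by simpa using hσ) (by simp)
  refine ⟨fun t ↦ (σ ^ t.val) a, ⟨fun t u htu ↦ ?_, fun x ↦ ?_⟩, fun t ↦ ?_, ?_⟩
  · simpa using (pow_eq_pow_iff _ _).mp htu
  · obtain ⟨n, hn⟩ := hσ.exists_pow_eq' Set.finite_univ (Set.mem_univ a) (Set.mem_univ x)
    exact ⟨n, ((pow_eq_pow_iff _ n).mpr (ZMod.natCast_zmod_val _)).trans hn⟩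
  · rw [← Perm.mul_apply, ← pow_succ', pow_eq_pow_iff]
    simp
  · simp

end Cycles

section Circuits

open MulOpposite Pointwise

variable {B W : Type*} [Group W] {s : B → W} {T : Set B}

theorem apply_mem_parabolic {i : B} (hi : i ∈ T) : s i ∈ parabolic s T :=
  Subgroup.subset_closure (Set.mem_image_of_mem s hi)

theorem parabolic_subset (hs : ∀ i, s i * s i = 1) {U : Set W} (h_one : 1 ∈ U)
    (h_mul : ∀ i ∈ T, ∀ u ∈ U, s i * u ∈ U) : (parabolic s T : Set W) ⊆ U := by
  intro w hw
  induction hw using Subgroup.closure_induction_left with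
  | one => exact h_one
  | mul_left x hx y _ ih =>
    obtain ⟨i, hi, rfl⟩ := hx
    exact h_mul i hi y ih
  | inv_mul_cancel x hx y _ ih =>
    obtain ⟨i, hi, rfl⟩ := hx
    rw [inv_eq_of_mul_eq_one_left (hs i)]
    exact h_mul i hi y ih

/-- `σ` is the successor map of a Hamiltonian circuit on the vertex set `U`, every step of which
is a left multiplication by some `s i` with `i ∈ T`. The values of `σ` off `U` are irrelevant. -/
structure IsCircuitOn (s : B → W) (T : Set B) (U : Set W) (σ : Equiv.Perm W) : Prop where
  isCycleOn : σ.IsCycleOn U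
  exists_label : ∀ x ∈ U, ∃ i ∈ T, σ x = s i * x

namespace IsCircuitOn

variable {U : Set W} {σ : Equiv.Perm W}

theorem mono {T' : Set B} (hσ : IsCircuitOn s T U σ) (hT : T ⊆ T') : IsCircuitOn s T' U σ :=
  ⟨hσ.isCycleOn, fun x hx ↦ (hσ.exists_label x hx).imp fun _ hi ↦ hi.imp_left (hT ·)⟩

theorem inv (hσ : IsCircuitOn s T U σ) (hs : ∀ i, s i * s i = 1) : IsCircuitOn s T U σ⁻¹ := by
  refine ⟨hσ.isCycleOn.inv, fun x hx ↦ ?_⟩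
  obtain ⟨i, hi, hx_eq⟩ := hσ.exists_label (σ⁻¹ x) (hσ.isCycleOn.inv.1.mapsTo hx)
  have x_eq : x = s i * σ⁻¹ x := (σ.apply_symm_apply x).symm.trans hx_eq
  refine ⟨i, hi, ?_⟩
  nth_rw 2 [x_eq]
  rw [← mul_assoc, hs, one_mul]

theorem exists_translate (hσ : IsCircuitOn s T U σ) (g : W) :
    ∃ τ, IsCircuitOn s T (op g • U) τ ∧ ∀ x, τ (x * g) = σ x * g := by
  have τ_apply (x : W) :
      (Equiv.mulRight g * σ * (Equiv.mulRight g)⁻¹) (x * g) = σ x * g := by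
    simp [Equiv.Perm.mul_apply]
  refine ⟨_, ⟨hσ.isCycleOn.conj (g := Equiv.mulRight g), ?_⟩, τ_apply⟩
  rintro _ ⟨x, hx, rfl⟩
  obtain ⟨i, hi, hx_eq⟩ := hσ.exists_label x hx
  refine ⟨i, hi, ?_⟩
  change (Equiv.mulRight g * σ * (Equiv.mulRight g)⁻¹) (x * g) = s i * (x * g)
  rw [τ_apply, hx_eq, mul_assoc]

theorem subset_parabolic (hσ : IsCircuitOn s T U σ) (hU : U.Finite) (h_one : 1 ∈ U) :
    U ⊆ parabolic s T := by
  refine forall_mem_of_isCycleOn hU hσ.isCycleOn h_one (one_mem _) fun x hx hx_mem ↦ ?_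
  obtain ⟨i, hi, hx_eq⟩ := hσ.exists_label x hx
  rw [hx_eq]
  exact mul_mem (apply_mem_parabolic hi) hx_mem

theorem exists_apply_eq_mul [Finite W] (hσ : IsCircuitOn s T (parabolic s T) σ) {i : B}
    (hi : i ∈ T) (hmin : s i ∉ parabolic s (T \ {i})) :
    ∃ u ∈ parabolic s T, σ u = s i * u := by
  by_contra! avoids
  have hσ' : IsCircuitOn s (T \ {i}) (parabolic s T) σ := by
    refine ⟨hσ.isCycleOn, fun x hx ↦ ?_⟩
    obtain ⟨j, hj, hx_eq⟩ := hσ.exists_label x hx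
    exact ⟨j, ⟨hj, by rintro rfl; exact avoids x hx hx_eq⟩, hx_eq⟩
  exact hmin (hσ'.subset_parabolic (Set.toFinite _) (one_mem _) (apply_mem_parabolic hi))

theorem exists_rightCoset_through [Finite W] (hσ : IsCircuitOn s T (parabolic s T) σ) {i : B}
    (hi : i ∈ T) (hmin : s i ∉ parabolic s (T \ {i})) (v : W) :
    ∃ τ, IsCircuitOn s T (op v • (parabolic s T : Set W)) τ ∧ τ v = s i * v := by
  obtain ⟨u, hu, σ_u⟩ := hσ.exists_apply_eq_mul hi hmin
  obtain ⟨τ, hτ, τ_apply⟩ := hσ.exists_translate (u⁻¹ * v)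
  rw [op_mul, mul_smul, op_smul_coe_set (inv_mem hu)] at hτ
  refine ⟨τ, hτ, ?_⟩
  have τ_v := τ_apply u
  rwa [σ_u, mul_assoc, mul_inv_cancel_left] at τ_v

end IsCircuitOn

theorem exists_isCircuitOn_parabolic_pair (hs : ∀ i, s i * s i = 1) {p : W → Prop}
    (hp : ∀ i x, p (s i * x) ↔ ¬p x) (i j : B) :
    ∃ σ, IsCircuitOn s {i, j} (parabolic s {i, j}) σ := by
  classical
  have hi : s i ∈ parabolic s {i, j} := apply_mem_parabolic (Set.mem_insert i {j})
  have hj : s j ∈ parabolic s {i, j} := apply_mem_parabolic (Set.mem_insert_of_mem i rfl)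
  have cancel (k : B) (x : W) : s k * (s k * x) = x := by rw [← mul_assoc, hs, one_mul]
  let σ : Equiv.Perm W :=
    { toFun x := if p x then s i * x else s j * x
      invFun x := if p x then s j * x else s i * x
      left_inv x := by by_cases hx : p x <;> simp [hx, hp, cancel]
      right_inv x := by by_cases hx : p x <;> simp [hx, hp, cancel] }
  have σ_of_pos {x : W} (hx : p x) : σ x = s i * x := if_pos hx
  have σ_of_neg {x : W} (hx : ¬p x) : σ x = s j * x := if_neg hx
  have sameCycle_one : ∀ x ∈ parabolic s {i, j}, σ.SameCycle 1 x := by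
    refine parabolic_subset hs (Equiv.Perm.SameCycle.refl σ 1) ?_
    intro k hk x (hx : σ.SameCycle 1 x)
    have step : σ x = s k * x ∨ σ (s k * x) = x := by
      obtain rfl | rfl : k = i ∨ k = j := hk <;> by_cases hpx : p x
      · exact Or.inl (σ_of_pos hpx)
      · exact Or.inr (by rw [σ_of_pos ((hp k x).mpr hpx), cancel])
      · exact Or.inr (by rw [σ_of_neg (by rwa [hp, not_not]), cancel])
      · exact Or.inl (σ_of_neg hpx)
    rcases step with h | h
    · exact h ▸ hx.apply_right
    · exact (h.symm ▸ hx : σ.SameCycle 1 (σ (s k * x))).of_apply_right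
  have mem_iff (x : W) :
      σ x ∈ (parabolic s {i, j} : Set W) ↔ x ∈ (parabolic s {i, j} : Set W) := by
    by_cases hx : p x
    · rw [σ_of_pos hx]; exact mul_mem_cancel_left hi
    · rw [σ_of_neg hx]; exact mul_mem_cancel_left hj
  refine ⟨σ, ⟨σ.bijOn mem_iff, fun x hx y hy ↦
    (sameCycle_one x hx).symm.trans (sameCycle_one y hy)⟩, fun x _ ↦ ?_⟩
  by_cases hx : p x
  · exact ⟨i, Set.mem_insert i {j}, σ_of_pos hx⟩
  · exact ⟨j, Set.mem_insert_of_mem i rfl, σ_of_neg hx⟩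

namespace IsCircuitOn

variable {U : Set W} {σ : Equiv.Perm W} {k : B} {a : W}

theorem exists_label_of_mul_notMem (hσ : IsCircuitOn s (insert k T) U σ) (ha : a ∈ U)
    (hka : s k * a ∉ U) : ∃ i ∈ T, σ a = s i * a := by
  obtain ⟨i, rfl | hi, σ_a⟩ := hσ.exists_label a ha
  · exact absurd (σ_a ▸ hσ.isCycleOn.1.mapsTo ha) hka
  · exact ⟨i, hi, σ_a⟩

theorem exists_commuting_label (hσ : IsCircuitOn s (insert k T) U σ) (hs : ∀ i, s i * s i = 1)
    (hU : 2 < U.ncard) (hcomm : T.Pairwise fun i j ↦ Commute (s k) (s i) ∨ Commute (s k) (s j))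
    (ha : a ∈ U) (hka : s k * a ∉ U) :
    ∃ τ, IsCircuitOn s (insert k T) U τ ∧ ∃ i ∈ T, τ a = s i * a ∧ Commute (s k) (s i) := by
  obtain ⟨i, hi, σ_a⟩ := hσ.exists_label_of_mul_notMem ha hka
  obtain ⟨j, hj, σ_inv_a⟩ := (hσ.inv hs).exists_label_of_mul_notMem ha hka
  have hij : i ≠ j := by
    rintro rfl
    refine apply_apply_ne_of_isCycleOn hσ.isCycleOn hU ha ?_
    rw [σ_a, ← σ_inv_a]
    exact σ.apply_symm_apply a
  rcases hcomm hi hj hij with h | h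
  · exact ⟨σ, hσ, i, hi, σ_a, h⟩
  · exact ⟨σ⁻¹, hσ.inv hs, j, hj, σ_inv_a, h⟩

-- The edges `a — s i * a` and `s k * a — s i * (s k * a)` are opposite sides of a square, whose
-- other two sides have label `k`; exchanging the pairs of sides joins the two circuits into one.
theorem exists_union [Finite W] {V : Set W} {τ : Equiv.Perm W} {i : B}
    (hσ : IsCircuitOn s T U σ) (hτ : IsCircuitOn s T V τ) (hs : ∀ i, s i * s i = 1)
    (hUV : Disjoint U V) (hk : k ∈ T) (hcomm : Commute (s k) (s i)) (ha : a ∈ U)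
    (hka : s k * a ∈ V) (σ_a : σ a = s i * a) (τ_ka : τ (s k * a) = s i * (s k * a)) :
    ∃ ρ, IsCircuitOn s T (U ∪ V) ρ := by
  have hτ_inv := hτ.inv hs
  set c := τ (s k * a)
  have hcV : c ∈ V := hτ.isCycleOn.1.mapsTo hka
  have τ_inv_c : τ⁻¹ c = s k * a := τ.symm_apply_apply _
  have σ_a_eq : σ a = s k * c := by
    rw [τ_ka, σ_a, ← mul_assoc (s i), ← hcomm.eq, ← mul_assoc, ← mul_assoc, hs, one_mul]
  obtain ⟨ρ, ρ_cycle, ρ_a, ρ_c, ρ_U, ρ_V⟩ := exists_isCycleOn_union (Set.toFinite U)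
    (Set.toFinite V) hUV hσ.isCycleOn hτ_inv.isCycleOn ha hcV
  refine ⟨ρ, ρ_cycle, ?_⟩
  rintro x (hx | hx)
  · rcases eq_or_ne x a with rfl | hxa
    · exact ⟨k, hk, ρ_a.trans τ_inv_c⟩
    · rw [ρ_U x hx hxa]
      exact hσ.exists_label x hx
  · rcases eq_or_ne x c with rfl | hxc
    · exact ⟨k, hk, ρ_c.trans σ_a_eq⟩
    · rw [ρ_V x hx hxc]
      exact hτ_inv.exists_label x hx

theorem exists_union_rightCoset [Finite W] {σ₀ : Equiv.Perm W}
    (hσ₀ : IsCircuitOn s T (parabolic s T) σ₀) (hσ : IsCircuitOn s (insert k T) U σ)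
    (hs : ∀ i, s i * s i = 1) (hmin : ∀ i ∈ T, s i ∉ parabolic s (T \ {i}))
    (hcomm : T.Pairwise fun i j ↦ Commute (s k) (s i) ∨ Commute (s k) (s j))
    (hU : 2 < U.ncard) (hstable : ∀ h ∈ parabolic s T, ∀ u ∈ U, h * u ∈ U)
    (ha : a ∈ U) (hka : s k * a ∉ U) :
    ∃ ρ, IsCircuitOn s (insert k T) (U ∪ op (s k * a) • (parabolic s T : Set W)) ρ := by
  obtain ⟨σ', hσ', i, hi, σ'_a, h_commute⟩ := hσ.exists_commuting_label hs hU hcomm ha hka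
  obtain ⟨τ, hτ, τ_ka⟩ := hσ₀.exists_rightCoset_through hi (hmin i hi) (s k * a)
  have disjoint : Disjoint U (op (s k * a) • (parabolic s T : Set W)) := by
    rw [Set.disjoint_left]
    rintro _ hx ⟨h, hh, rfl⟩
    refine hka ?_
    simpa using hstable h⁻¹ (inv_mem hh) _ hx
  exact hσ'.exists_union (hτ.mono (Set.subset_insert k T)) hs disjoint
    (Set.mem_insert k T) h_commute ha (mem_own_rightCoset _ _) σ'_a τ_ka

theorem exists_insert [Finite W] (hσ : IsCircuitOn s T (parabolic s T) σ)
    (hs : ∀ i, s i * s i = 1) (hmin : ∀ i ∈ T, s i ∉ parabolic s (T \ {i}))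
    (hcomm : T.Pairwise fun i j ↦ Commute (s k) (s i) ∨ Commute (s k) (s j))
    (hcard : 2 < (parabolic s T : Set W).ncard) :
    ∃ ρ, IsCircuitOn s (insert k T) (parabolic s (insert k T)) ρ := by
  obtain ⟨U, hTU, hmax⟩ := Finite.exists_le_maximal
    (p := fun U : Set W ↦ (∃ ρ, IsCircuitOn s (insert k T) U ρ) ∧
      ∀ h ∈ parabolic s T, ∀ u ∈ U, h * u ∈ U)
    ⟨⟨σ, hσ.mono (Set.subset_insert k T)⟩, fun _ hh _ hu ↦ mul_mem hh hu⟩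
  obtain ⟨⟨ρ, hρ⟩, hstable⟩ := hmax.prop
  have U_card : 2 < U.ncard := hcard.trans_le (Set.ncard_le_ncard hTU)
  have k_mul_mem : ∀ a ∈ U, s k * a ∈ U := by
    intro a ha
    by_contra hka
    obtain ⟨ρ', hρ'⟩ :=
      hσ.exists_union_rightCoset hρ hs hmin hcomm U_card hstable ha hka
    refine hka (hmax.le_of_ge ⟨⟨ρ', hρ'⟩, ?_⟩ Set.subset_union_left
      (Or.inr (mem_own_rightCoset _ _)))
    rintro h hh _ (hu | ⟨g, hg, rfl⟩)
    · exact Or.inl (hstable h hh _ hu)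
    · exact Or.inr ⟨h * g, mul_mem hh hg, mul_assoc _ _ _⟩
  have U_eq : U = parabolic s (insert k T) := by
    have h_one : 1 ∈ U := hTU (one_mem _)
    refine (hρ.subset_parabolic (Set.toFinite U) h_one).antisymm (parabolic_subset hs h_one ?_)
    rintro i (rfl | hi)
    · exact k_mul_mem
    · exact hstable _ (apply_mem_parabolic hi)
  exact ⟨ρ, U_eq ▸ hρ⟩

end IsCircuitOn

end Circuits

section FiniteCoxeterGroup

variable {B W : Type*} [Group W] {M : CoxeterMatrix B}

theorem two_lt_ncard_parabolic [Finite W] (cs : CoxeterSystem M W) {T : Set B} (hT : T.Nontrivial) :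
    2 < (parabolic cs.simple T : Set W).ncard := by
  obtain ⟨i, hi, j, hj, hij⟩ := hT
  have hi_notMem : cs.simple i ∉ parabolic cs.simple {j} := simple_notMem_parabolic cs hij
  have hj_notMem : cs.simple j ∉ parabolic cs.simple ∅ := simple_notMem_parabolic cs (by simp)
  refine (Set.two_lt_ncard (Set.toFinite _)).mpr
    ⟨1, one_mem _, _, apply_mem_parabolic hi, _, apply_mem_parabolic hj, ?_, ?_, ?_⟩
  · exact ne_of_mem_of_not_mem (one_mem _) hi_notMem
  · exact ne_of_mem_of_not_mem (one_mem _) hj_notMem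
  · exact (ne_of_mem_of_not_mem (apply_mem_parabolic (Set.mem_singleton j)) hi_notMem).symm

theorem exists_isCircuitOn_parabolic_simple_pair (cs : CoxeterSystem M W) (i j : B) :
    ∃ σ, IsCircuitOn cs.simple {i, j} (parabolic cs.simple {i, j}) σ := by
  have even_length_iff (i : B) (x : W) :
      Even (cs.length (cs.simple i * x)) ↔ ¬Even (cs.length x) := by
    rcases cs.length_simple_mul x i with h | h
    · rw [h, Nat.even_add_one]
    · rw [← h, Nat.even_add_one, not_not]
  exact exists_isCircuitOn_parabolic_pair (p := fun x ↦ Even (cs.length x))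
    cs.simple_mul_simple_self even_length_iff i j

theorem exists_isCircuitOn_parabolic [Finite W] (cs : CoxeterSystem M W) (T : Finset B)
    (hT : T.Nonempty) : ∃ σ, IsCircuitOn cs.simple T (parabolic cs.simple T) σ := by
  classical
  induction T using Finset.strongInduction with
  | H T ih =>
    obtain ⟨k, hk, leaf⟩ := exists_leaf cs hT
    have T_eq : (T : Set B) = insert k (↑(T.erase k) : Set B) := by
      rw [← Finset.coe_insert, Finset.insert_erase hk]
    rw [T_eq]
    rcases (T.erase k).eq_empty_or_nonempty with h_empty | h_nonempty
    · simpa [h_empty] using exists_isCircuitOn_parabolic_simple_pair cs k k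
    obtain ⟨j, h_singleton⟩ | h_nontrivial := h_nonempty.exists_eq_singleton_or_nontrivial
    · simpa [h_singleton] using exists_isCircuitOn_parabolic_simple_pair cs k j
    obtain ⟨σ, hσ⟩ := ih _ (Finset.erase_ssubset hk) h_nonempty
    have hcomm : ((T.erase k : Finset B) : Set B).Pairwise fun i j ↦
        Commute (cs.simple k) (cs.simple i) ∨ Commute (cs.simple k) (cs.simple j) := by
      rw [Finset.coe_erase]
      exact leaf.mono' fun i j h ↦
        h.imp (commute_simple_of_eq_two cs) (commute_simple_of_eq_two cs)
    have hmin (i : B) (_ : i ∈ (T.erase k : Finset B)) :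
        cs.simple i ∉ parabolic cs.simple (↑(T.erase k) \ {i}) :=
      simple_notMem_parabolic cs fun h ↦ h.2 rfl
    exact hσ.exists_insert cs.simple_mul_simple_self hmin hcomm
      (two_lt_ncard_parabolic cs h_nontrivial)

theorem exists_isCircuitOn_univ_through [Finite B] [Finite W] (cs : CoxeterSystem M W) (v : W)
    (i : B) :
    ∃ σ, IsCircuitOn cs.simple Set.univ Set.univ σ ∧ σ v = cs.simple i * v := by
  have := Fintype.ofFinite B
  obtain ⟨σ, hσ⟩ := exists_isCircuitOn_parabolic cs Finset.univ ⟨i, Finset.mem_univ i⟩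
  obtain ⟨τ, hτ, τ_v⟩ := hσ.exists_rightCoset_through (by simp)
    (simple_notMem_parabolic cs fun h ↦ h.2 rfl) v
  have parabolic_univ : parabolic cs.simple Set.univ = ⊤ := by
    rw [parabolic, Set.image_univ, cs.subgroup_closure_range_simple]
  refine ⟨τ, ?_, τ_v⟩
  simpa [parabolic_univ] using hτ

end FiniteCoxeterGroup

end CoxeterCircuit

/-- For a finite Coxeter system `(W, S)` over a nonempty finite index set `B`, the
Cayley graph of `(W, S)` has a Hamilton circuit passing through any prescribed
vertex along an edge with any prescribed label: for every `v ∈ W` and `i ∈ B` there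
are a Hamiltonian circuit map `θ : ℤ/kℤ → W` (`k = |W|`) and a `t` with `θ(t) = v`
and `θ(t+1) = sᵢ · v`. -/
theorem exists_hamiltonianCircuitMap_through_vertex_with_label
    {B W : Type*} [Fintype B] [Nonempty B] [Group W] [Finite W]
    (M : CoxeterMatrix B) (cs : CoxeterSystem M W) :
    ∀ (v : W) (i : B), ∃ θ : ZMod (Nat.card W) → W,
      Function.Bijective θ ∧
      (∀ t, θ (t + 1) * (θ t)⁻¹ ∈ Set.range cs.simple) ∧
      ∃ t, θ t = v ∧ θ (t + 1) = cs.simple i * v := by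
  intro v i
  obtain ⟨σ, hσ, σ_v⟩ := CoxeterCircuit.exists_isCircuitOn_univ_through cs v i
  obtain ⟨θ, θ_bijective, θ_add_one, θ_zero⟩ :=
    CoxeterCircuit.exists_bijective_zmod_of_isCycleOn_univ hσ.isCycleOn v
  refine ⟨θ, θ_bijective, fun t ↦ ?_, 0, θ_zero, ?_⟩
  · obtain ⟨j, -, σ_θ⟩ := hσ.exists_label (θ t) (Set.mem_univ _)
    exact ⟨j, by rw [θ_add_one, σ_θ, mul_inv_cancel_right]⟩
  · rw [θ_add_one, θ_zero, σ_v]
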